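/- arXiv:1506.07947 — 2 statements merged into one kernel-verified Lean document; each statement's English description precedes it below -/
import Mathlib

section
/- (Partition for bundled sampling.) For all positive integers k₁, k₂, setting k̃ = min{k₁,k₂}, there exists a partition (𝒯₁,…,𝒯_N) of ([k₁]×[k₂]) × ([k₁]×[k₂]) into N ≤ 2k₁²k₂²/k̃ disjoint subsets with ∪_{ℓ∈[N]} 𝒯_ℓ = ([k₁]×[k₂])², such that each 𝒯_ℓ has cardinality at most k̃, and within each 𝒯_ℓ any two distinct elements ((a,b),(a',b')) and ((c,d),(c',d')) satisfy {a,a'} ∩ {c,c'} = ∅ and {b,b'} ∩ {d,d'} = ∅. -/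
open scoped BigOperators

/-!
Colour `((a, b), (a', b'))` by `a + a' mod k₁`, `b + b' mod k₂` and `a + b mod max k₁ k₂`. Within a
colour, each of `a` and `b` determines the whole element. If two elements of the same colour share
a first index, then, `a + a'` being fixed, one has `(a, a')` where the other has `(a', a)`; so each
element has at most one such partner, and likewise at most one for the second indices. A graph
that is the union of two matchings is bipartite, so one further bit separates all the clashing
elements, and `2 k₁ k₂ max k₁ k₂` colours suffice.
-/

section UnionOfMatchings

variable {V : Type*}

open Function

/-- As `σ` inverts `σ * τ`, it would act on a preserved cycle as a reflection, and then `σ` or `τ`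
would fix a point of that cycle. -/
theorem not_sameCycle_mul_apply {σ τ : Equiv.Perm V} (hσ : Involutive σ) (hτ : Involutive τ)
    (hσ_fix : ∀ x, σ x ≠ x) (hτ_fix : ∀ x, τ x ≠ x) (x : V) : ¬ (σ * τ).SameCycle x (σ x) := by
  rintro ⟨m, hm⟩
  have hconj : SemiconjBy σ (σ * τ) (σ * τ)⁻¹ := by
    ext y
    simp [Equiv.Perm.inv_def, hσ.symm_eq_self_of_involutive, hτ.symm_eq_self_of_involutive, hσ _]
  have hreflect (j : ℤ) : σ (((σ * τ) ^ j) x) = ((σ * τ) ^ (m - j)) x := by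
    calc σ (((σ * τ) ^ j) x) = ((σ * τ)⁻¹ ^ j) (σ x) := congr($((hconj.zpow_right j).eq) x)
      _ = ((σ * τ) ^ (m - j)) x := by
        rw [← hm, ← Equiv.Perm.mul_apply, inv_zpow', ← zpow_add, neg_add_eq_sub]
  obtain ⟨j, rfl | rfl⟩ := m.even_or_odd'
  · exact hσ_fix (((σ * τ) ^ j) x) (by rw [hreflect, two_mul, add_sub_cancel_right])
  · refine hτ_fix (((σ * τ) ^ j) x) (hσ.injective ?_)
    calc σ (τ (((σ * τ) ^ j) x)) = ((σ * τ) ^ (1 + j)) x := by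
          rw [zpow_one_add]; rfl
      _ = σ (((σ * τ) ^ j) x) := by rw [hreflect]; congr 2; ring

theorem exists_bool_alternating {σ τ : Equiv.Perm V} (hσ : Involutive σ) (hτ : Involutive τ)
    (hσ_fix : ∀ x, σ x ≠ x) (hτ_fix : ∀ x, τ x ≠ x) :
    ∃ f : V → Bool, ∀ x, f (σ x) ≠ f x ∧ f (τ x) ≠ f x := by
  let cycle : V → Quotient (Equiv.Perm.SameCycle.setoid (σ * τ)) := Quotient.mk _
  have cycle_eq {x y : V} (h : (σ * τ).SameCycle x y) : cycle x = cycle y := Quotient.sound h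
  have cycle_ne (x : V) : cycle x ≠ cycle (σ x) := fun h =>
    not_sameCycle_mul_apply hσ hτ hσ_fix hτ_fix x (Quotient.exact h)
  have cycle_στ (x : V) : cycle (σ (τ x)) = cycle x :=
    cycle_eq (Equiv.Perm.sameCycle_apply_left.2 (.refl _ _))
  have cycle_τ (x : V) : cycle (τ x) = cycle (σ x) := by
    rw [← cycle_στ (τ x), hτ x]
  obtain ⟨_, _⟩ := exists_wellFoundedLT (Quotient (Equiv.Perm.SameCycle.setoid (σ * τ)))
  -- `σ` and `τ` exchange the same pairs of distinct cycles; the smaller cycle of each pair gets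
  -- the value `true`.
  refine ⟨fun x => decide (cycle x < cycle (σ x)), fun x => ?_⟩
  simp only [hσ x, cycle_τ, cycle_στ]
  rcases (cycle_ne x).lt_or_gt with h | h <;> simp [h, h.le]

/-- Doubling the vertices removes the fixed points: an unmatched vertex is exchanged with its own
copy. -/
theorem exists_involutive_double_of_neighborSet_subsingleton {M : SimpleGraph V}
    (hM : ∀ x, (M.neighborSet x).Subsingleton) :
    ∃ σ : Equiv.Perm (V × Bool), Involutive σ ∧ (∀ p, σ p ≠ p) ∧
      ∀ x y b, M.Adj x y → σ (x, b) = (y, b) := by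
  classical
  let σ : V × Bool → V × Bool := fun p =>
    if h : ∃ y, M.Adj p.1 y then (h.choose, p.2) else (p.1, !p.2)
  have σ_of_adj {x y : V} (b : Bool) (h : M.Adj x y) : σ (x, b) = (y, b) := by
    have hx : ∃ y, M.Adj x y := ⟨y, h⟩
    simp only [σ, dif_pos hx, hM x hx.choose_spec h]
  have σ_of_not_adj {x : V} (b : Bool) (h : ¬ ∃ y, M.Adj x y) : σ (x, b) = (x, !b) := dif_neg h
  have σ_involutive : Involutive σ := by
    rintro ⟨x, b⟩
    by_cases h : ∃ y, M.Adj x y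
    · obtain ⟨y, hy⟩ := h
      rw [σ_of_adj b hy, σ_of_adj b hy.symm]
    · rw [σ_of_not_adj b h, σ_of_not_adj _ h, Bool.not_not]
  refine ⟨σ_involutive.toPerm, σ_involutive, ?_, fun x y b => σ_of_adj b⟩
  rintro ⟨x, b⟩ hfix
  rw [Involutive.coe_toPerm] at hfix
  by_cases h : ∃ y, M.Adj x y
  · obtain ⟨y, hy⟩ := h
    exact hy.ne' (congrArg Prod.fst ((σ_of_adj b hy).symm.trans hfix))
  · exact Bool.not_ne_self b (congrArg Prod.snd ((σ_of_not_adj b h).symm.trans hfix))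

theorem isBipartite_sup_of_neighborSet_subsingleton {M₁ M₂ : SimpleGraph V}
    (hM₁ : ∀ x, (M₁.neighborSet x).Subsingleton) (hM₂ : ∀ x, (M₂.neighborSet x).Subsingleton) :
    (M₁ ⊔ M₂).IsBipartite := by
  obtain ⟨σ, hσ, hσ_fix, hσ_adj⟩ := exists_involutive_double_of_neighborSet_subsingleton hM₁
  obtain ⟨τ, hτ, hτ_fix, hτ_adj⟩ := exists_involutive_double_of_neighborSet_subsingleton hM₂
  obtain ⟨f, hf⟩ := exists_bool_alternating hσ hτ hσ_fix hτ_fix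
  have hvalid : ∀ {x y}, (M₁ ⊔ M₂).Adj x y → f (x, false) ≠ f (y, false) := by
    rintro x y (h | h)
    · exact hσ_adj x y false h ▸ (hf (x, false)).1.symm
    · exact hτ_adj x y false h ▸ (hf (x, false)).2.symm
  exact (SimpleGraph.Coloring.mk (fun x => f (x, false)) hvalid).colorable

end UnionOfMatchings

section IndexSets

variable {V α κ : Type*}

theorem card_le_card_of_pairwiseDisjoint [Fintype α] {s : Finset V} {I : V → Finset α}
    (hs : (s : Set V).PairwiseDisjoint I) (hI : ∀ x ∈ s, (I x).Nonempty) :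
    s.card ≤ Fintype.card α := by
  classical
  exact (Finset.card_le_card_biUnion hs hI).trans (Finset.card_le_univ _)

/-- The conflicts left by a colouring `c`: distinct elements of the same colour are adjacent
when their index sets meet. -/
def clashGraph (c : V → κ) (I : V → Finset α) : SimpleGraph V where
  Adj x y := x ≠ y ∧ c x = c y ∧ ¬ Disjoint (I x) (I y)
  symm := ⟨fun _ _ h => ⟨h.1.symm, h.2.1.symm, fun hd => h.2.2 hd.symm⟩⟩
  loopless := ⟨fun _ h => h.1 rfl⟩

theorem clashGraph_neighborSet_subsingleton [DecidableEq α] [AddCommMagma α] [IsCancelAdd α]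
    {c : V → κ} {p q : V → α} (hp : ∀ x y, c x = c y → p x = p y → x = y)
    (hpq : ∀ x y, c x = c y → p x + q x = p y + q y) (x : V) :
    ((clashGraph c fun x => {p x, q x}).neighborSet x).Subsingleton := by
  have swapped {y : V} (h : (clashGraph c fun x => {p x, q x}).Adj x y) : p y = q x := by
    obtain ⟨hne, hc, hmeet⟩ := h
    have hsum := hpq x y hc
    have hp_ne : p x ≠ p y := fun h => hne (hp x y hc h)
    have hq_ne : q x ≠ q y := fun h => hp_ne (add_right_cancel (h ▸ hsum))
    by_contra hswap
    have hcross : p x ≠ q y := fun h =>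
      hswap (add_right_cancel (hsum.symm.trans (h ▸ add_comm (p x) (q x))))
    exact hmeet (by simp [hp_ne.symm, hq_ne.symm, hcross.symm, hswap])
  intro y hy z hz
  exact hp y z (hy.2.1.symm.trans hz.2.1) ((swapped hy).trans (swapped hz).symm)

end IndexSets

section IndexPairs

variable {α β γ : Type*}

/-- The set `{a, a'}` of first-coordinate indices of `((a, b), (a', b'))`. -/
def firstIndices [DecidableEq α] (x : (α × β) × (α × β)) : Finset α := {x.1.1, x.2.1}

/-- The set `{b, b'}` of second-coordinate indices of `((a, b), (a', b'))`. -/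
def secondIndices [DecidableEq β] (x : (α × β) × (α × β)) : Finset β := {x.1.2, x.2.2}

theorem exists_coloring_disjoint_indices [DecidableEq α] [AddCommMagma α] [IsCancelAdd α]
    [DecidableEq β] [AddCommMagma β] [IsCancelAdd β] [Add γ] [IsCancelAdd γ]
    (i : α ↪ γ) (j : β ↪ γ) :
    ∃ c : (α × β) × (α × β) → (α × β × γ) × Fin 2, ∀ x y, c x = c y → x ≠ y →
      Disjoint (firstIndices x) (firstIndices y) ∧
        Disjoint (secondIndices x) (secondIndices y) := by
  let c : (α × β) × (α × β) → α × β × γ := fun x =>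
    (x.1.1 + x.2.1, x.1.2 + x.2.2, i x.1.1 + j x.1.2)
  have eq_of_indices_eq {x y} (hc : c x = c y) (h₁ : x.1.1 = y.1.1) (h₂ : x.1.2 = y.1.2) :
      x = y := by
    simp only [c, Prod.mk.injEq, h₁, h₂, add_right_inj] at hc
    exact Prod.ext (Prod.ext h₁ h₂) (Prod.ext hc.1 hc.2.1)
  have eq_of_first_eq (x y) (hc : c x = c y) (h : x.1.1 = y.1.1) : x = y := by
    have hij : i x.1.1 + j x.1.2 = i y.1.1 + j y.1.2 := congr($hc.2.2)
    exact eq_of_indices_eq hc h (j.injective (add_left_cancel (h ▸ hij)))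
  have eq_of_second_eq (x y) (hc : c x = c y) (h : x.1.2 = y.1.2) : x = y := by
    have hij : i x.1.1 + j x.1.2 = i y.1.1 + j y.1.2 := congr($hc.2.2)
    exact eq_of_indices_eq hc (i.injective (add_right_cancel (h ▸ hij))) h
  obtain ⟨side⟩ : (clashGraph c firstIndices ⊔ clashGraph c secondIndices).IsBipartite :=
    isBipartite_sup_of_neighborSet_subsingleton
      (clashGraph_neighborSet_subsingleton eq_of_first_eq fun _ _ h => congrArg Prod.fst h)
      (clashGraph_neighborSet_subsingleton eq_of_second_eq fun _ _ h => congr($h.2.1))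
  refine ⟨fun x => (c x, side x), fun x y hxy hne => ?_⟩
  obtain ⟨hc, hside⟩ := Prod.mk.inj hxy
  constructor <;> by_contra hmeet
  · exact side.valid (Or.inl ⟨hne, hc, hmeet⟩) hside
  · exact side.valid (Or.inr ⟨hne, hc, hmeet⟩) hside

end IndexPairs

/-- Lemma 10 (partition for bundled sampling): `([k₁]×[k₂])²` can be partitioned into
at most `2k₁²k₂²/min{k₁,k₂}` classes, each of cardinality at most `min{k₁,k₂}`, such
that any two distinct elements within the same class share no first-coordinate index
and no second-coordinate index. -/
theorem bundle_index_partition (k1 k2 : ℕ) (hk1 : 0 < k1) (hk2 : 0 < k2) :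
    ∃ (N : ℕ) (T : Fin N → Finset ((Fin k1 × Fin k2) × (Fin k1 × Fin k2))),
      (N : ℝ) ≤ 2 * (k1 : ℝ) ^ 2 * (k2 : ℝ) ^ 2 / min (k1 : ℝ) (k2 : ℝ) ∧
      (∀ a b : Fin N, a ≠ b → Disjoint (T a) (T b)) ∧
      (∀ x : (Fin k1 × Fin k2) × (Fin k1 × Fin k2), ∃ a : Fin N, x ∈ T a) ∧
      (∀ a : Fin N, (T a).card ≤ min k1 k2) ∧
      (∀ a : Fin N, ∀ x ∈ T a, ∀ y ∈ T a, x ≠ y →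
        Disjoint ({x.1.1, x.2.1} : Finset (Fin k1)) ({y.1.1, y.2.1} : Finset (Fin k1)) ∧
        Disjoint ({x.1.2, x.2.2} : Finset (Fin k2)) ({y.1.2, y.2.2} : Finset (Fin k2))) := by
  obtain ⟨c, hc⟩ := exists_coloring_disjoint_indices
    (Fin.castLEEmb (le_max_left k1 k2)) (Fin.castLEEmb (le_max_right k1 k2))
  let e : (Fin k1 × Fin k2 × Fin (max k1 k2)) × Fin 2 ≃ Fin (2 * (k1 * k2 * max k1 k2)) :=
    Fintype.equivFinOfCardEq (by simp only [Fintype.card_prod, Fintype.card_fin]; ring)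
  let T a := Finset.univ.filter fun x => e (c x) = a
  have mem_T {a x} : x ∈ T a ↔ e (c x) = a := Finset.mem_filter_univ x
  have hT (a) (x) (hx : x ∈ T a) (y) (hy : y ∈ T a) (hxy : x ≠ y) :=
    hc x y (e.injective ((mem_T.1 hx).trans (mem_T.1 hy).symm)) hxy
  refine ⟨_, T, ?_, ?_, fun x => ⟨e (c x), mem_T.2 rfl⟩, fun a => le_min ?_ ?_, hT⟩
  · rw [le_div_iff₀ (lt_min (Nat.cast_pos.2 hk1) (Nat.cast_pos.2 hk2))]
    push_cast
    exact le_of_eq (by linear_combination (2 * k1 * k2 : ℝ) * min_mul_max (k1 : ℝ) k2)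
  · exact fun a b hab => Finset.disjoint_left.2 fun x ha hb =>
      hab ((mem_T.1 ha).symm.trans (mem_T.1 hb))
  · simpa using card_le_card_of_pairwiseDisjoint (I := firstIndices)
      (fun x hx y hy hxy => (hT a x hx y hy hxy).1) (fun x _ => Finset.insert_nonempty _ _)
  · simpa using card_le_card_of_pairwiseDisjoint (I := secondIndices)
      (fun x hx y hy hxy => (hT a x hx y hy hxy).2) (fun x _ => Finset.insert_nonempty _ _)
end

section
/- Let ρ be a positive integer and θ ∈ ℝ^ρ with |θ_i| ≤ α for all i ∈ [ρ]. Let p ∈ ℝ^ρ be the softmax probability vector p_i = e^{θ_i}/(e^{θ_1} + ⋯ + e^{θ_ρ}). Then, in the positive semidefinite order on ρ×ρ symmetric matrices, e^{2α}·(diag(p) − p·p^T) ⪰ (1/ρ)·I − (1/ρ²)·𝟙𝟙^T, where I is the ρ×ρ identity matrix and 𝟙 ∈ ℝ^ρ is the all-ones vector. -/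
open scoped BigOperators

/-!
`diag(p) - p pᵀ` is the covariance matrix of the categorical distribution `p`: its quadratic form
at `x` is `Var_p x`. Likewise `ρ⁻¹ I - ρ⁻² 𝟙𝟙ᵀ` is the covariance matrix of the uniform
distribution. If `q ≤ C p` pointwise then `Var_q ≤ C Var_p`: the mean minimises the mean squared
deviation, so with `m` the `p`-mean of `x`,
`Var_q x ≤ ∑ qᵢ (xᵢ - m)² ≤ C ∑ pᵢ (xᵢ - m)² = C Var_p x`.
Scores differing by at most `δ` give softmax weights `pᵢ ≥ e^{-δ} / ρ`, so `C = e^δ` is admissible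
for uniform `q`; scores in `[-α, α]` allow `δ = 2α`.
-/

open Matrix

section CategoricalCov

variable {ι R : Type*} [DecidableEq ι]

/-- The covariance matrix `diag(p) - p pᵀ` of the one-hot encoding of a categorical random variable
with weights `p`. The weights are not required to be nonnegative or to sum to `1`. -/
def categoricalCov [Ring R] (p : ι → R) : Matrix ι ι R :=
  diagonal p - vecMulVec p p

lemma categoricalCov_const [Ring R] (c : R) :
    categoricalCov (fun _ : ι => c) = c • 1 - c ^ 2 • of fun _ _ => 1 := by
  ext i j
  simp [categoricalCov, diagonal_apply, one_apply, vecMulVec_apply, sq]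

lemma categoricalCov_isSymm [CommRing R] (p : ι → R) : (categoricalCov p).IsSymm :=
  (isSymm_diagonal p).sub (transpose_vecMulVec p p)

variable [Fintype ι]

lemma dotProduct_categoricalCov_mulVec [CommRing R] (p x : ι → R) :
    x ⬝ᵥ categoricalCov p *ᵥ x = ∑ i, p i * x i ^ 2 - (p ⬝ᵥ x) ^ 2 := by
  have hdiag : x ⬝ᵥ diagonal p *ᵥ x = ∑ i, p i * x i ^ 2 :=
    Finset.sum_congr rfl fun i _ => by rw [mulVec_diagonal]; ring
  have hrankOne : x ⬝ᵥ vecMulVec p p *ᵥ x = (p ⬝ᵥ x) ^ 2 := by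
    rw [vecMulVec_mulVec, dotProduct_smul, op_smul_eq_mul, dotProduct_comm x p, sq]
  rw [categoricalCov, sub_mulVec, dotProduct_sub, hdiag, hrankOne]

lemma sum_mul_sub_sq_eq_dotProduct_categoricalCov_mulVec_add [CommRing R] {p : ι → R}
    (hp : ∑ i, p i = 1) (x : ι → R) (c : R) :
    ∑ i, p i * (x i - c) ^ 2 = x ⬝ᵥ categoricalCov p *ᵥ x + (p ⬝ᵥ x - c) ^ 2 := by
  have hexpand : ∑ i, p i * (x i - c) ^ 2 =
      ∑ i, p i * x i ^ 2 - 2 * c * (p ⬝ᵥ x) + c ^ 2 * ∑ i, p i := by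
    simp only [dotProduct, Finset.mul_sum, ← Finset.sum_sub_distrib, ← Finset.sum_add_distrib]
    exact Finset.sum_congr rfl fun i _ => by ring
  rw [hexpand, hp, dotProduct_categoricalCov_mulVec]
  ring

variable [CommRing R] [LinearOrder R] [IsOrderedRing R] {C : R} {p q : ι → R}

lemma dotProduct_categoricalCov_mulVec_le_of_le_mul (hp : ∑ i, p i = 1) (hq : ∑ i, q i = 1)
    (hqp : ∀ i, q i ≤ C * p i) (x : ι → R) :
    x ⬝ᵥ categoricalCov q *ᵥ x ≤ C * (x ⬝ᵥ categoricalCov p *ᵥ x) := by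
  calc x ⬝ᵥ categoricalCov q *ᵥ x
      ≤ x ⬝ᵥ categoricalCov q *ᵥ x + (q ⬝ᵥ x - p ⬝ᵥ x) ^ 2 :=
        le_add_of_nonneg_right (sq_nonneg _)
    _ = ∑ i, q i * (x i - p ⬝ᵥ x) ^ 2 :=
        (sum_mul_sub_sq_eq_dotProduct_categoricalCov_mulVec_add hq x _).symm
    _ ≤ ∑ i, C * p i * (x i - p ⬝ᵥ x) ^ 2 :=
        Finset.sum_le_sum fun i _ => mul_le_mul_of_nonneg_right (hqp i) (sq_nonneg _)
    _ = C * ∑ i, p i * (x i - p ⬝ᵥ x) ^ 2 := by simp only [Finset.mul_sum, mul_assoc]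
    _ = C * (x ⬝ᵥ categoricalCov p *ᵥ x) := by
        rw [sum_mul_sub_sq_eq_dotProduct_categoricalCov_mulVec_add hp]
        simp

theorem posSemidef_smul_categoricalCov_sub_of_le_mul [StarRing R] [TrivialStar R]
    (hp : ∑ i, p i = 1) (hq : ∑ i, q i = 1) (hqp : ∀ i, q i ≤ C * p i) :
    (C • categoricalCov p - categoricalCov q).PosSemidef := by
  refine .of_dotProduct_mulVec_nonneg ?_ fun x => ?_
  · rw [IsHermitian, conjTranspose_eq_transpose_of_trivial]
    exact ((categoricalCov_isSymm p).smul C).sub (categoricalCov_isSymm q)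
  · rw [star_trivial, sub_mulVec, smul_mulVec, dotProduct_sub, dotProduct_smul, smul_eq_mul,
      sub_nonneg]
    exact dotProduct_categoricalCov_mulVec_le_of_le_mul hp hq hqp x

end CategoricalCov

section Softmax

variable {ι : Type*} [Fintype ι]

/-- The softmax weights `e^{θᵢ} / ∑ⱼ e^{θⱼ}` of the scores `θ`. -/
noncomputable def softmax (θ : ι → ℝ) (i : ι) : ℝ :=
  Real.exp (θ i) / ∑ j, Real.exp (θ j)

variable [Nonempty ι]

lemma sum_exp_pos (θ : ι → ℝ) : 0 < ∑ j, Real.exp (θ j) :=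
  Finset.sum_pos (fun _ _ => Real.exp_pos _) Finset.univ_nonempty

lemma sum_softmax (θ : ι → ℝ) : ∑ i, softmax θ i = 1 := by
  simp only [softmax, ← Finset.sum_div, div_self (sum_exp_pos θ).ne']

lemma inv_card_le_exp_mul_softmax {θ : ι → ℝ} {δ : ℝ} {i : ι} (hθ : ∀ j, θ j - θ i ≤ δ) :
    (Fintype.card ι : ℝ)⁻¹ ≤ Real.exp δ * softmax θ i := by
  have hsum : ∑ j, Real.exp (θ j) ≤ Fintype.card ι * (Real.exp δ * Real.exp (θ i)) := by
    rw [← Real.exp_add, ← nsmul_eq_mul]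
    exact Finset.sum_le_card_nsmul _ _ _ fun j _ => Real.exp_le_exp.2 (by linarith [hθ j])
  rw [softmax, ← mul_div_assoc, le_div_iff₀ (sum_exp_pos θ),
    inv_mul_le_iff₀ (Nat.cast_pos.2 Fintype.card_pos)]
  exact hsum

theorem softmax_hessian_lower_bound_general [DecidableEq ι] {θ : ι → ℝ} {δ : ℝ}
    (hθ : ∀ i j, θ i - θ j ≤ δ) :
    (Real.exp δ • (diagonal (softmax θ) - vecMulVec (softmax θ) (softmax θ)) -
      ((Fintype.card ι : ℝ)⁻¹ • (1 : Matrix ι ι ℝ) -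
        ((Fintype.card ι : ℝ) ^ 2)⁻¹ • of fun _ _ => (1 : ℝ))).PosSemidef := by
  have hsum_uniform : ∑ _i : ι, (Fintype.card ι : ℝ)⁻¹ = 1 := by simp
  rw [← inv_pow, ← categoricalCov_const]
  exact posSemidef_smul_categoricalCov_sub_of_le_mul (sum_softmax θ) hsum_uniform
    fun i => inv_card_le_exp_mul_softmax fun j => hθ j i

end Softmax

/-- Remark (Claim 1 of Hajek–Oh–Xu): for a softmax probability vector `p` built from
scores `θ` with `|θᵢ| ≤ α`, one has
`e^{2α}(diag(p) − ppᵀ) ⪰ (1/ρ)I − (1/ρ²)𝟙𝟙ᵀ` in the positive semidefinite order. -/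
theorem softmax_hessian_lower_bound
    (ρ : ℕ) (hρ : 0 < ρ) (α : ℝ) (θ : Fin ρ → ℝ)
    (hθ : ∀ i, |θ i| ≤ α)
    (p : Fin ρ → ℝ)
    (hp : ∀ i, p i = Real.exp (θ i) / ∑ j, Real.exp (θ j)) :
    (Real.exp (2 * α) • (Matrix.diagonal p - Matrix.vecMulVec p p) -
      (((ρ : ℝ)⁻¹ • (1 : Matrix (Fin ρ) (Fin ρ) ℝ)) -
        (((ρ : ℝ) ^ 2)⁻¹ • Matrix.of (fun _ _ => (1 : ℝ))))).PosSemidef := by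
  have : Nonempty (Fin ρ) := ⟨⟨0, hρ⟩⟩
  have hosc : ∀ i j, θ i - θ j ≤ 2 * α := fun i j => by
    linarith [(abs_le.1 (hθ i)).2, (abs_le.1 (hθ j)).1]
  obtain rfl : p = softmax θ := funext hp
  simpa only [Fintype.card_fin] using softmax_hessian_lower_bound_general hosc
end
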